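/- Let d ≥ 1, D := {1,...,d}, let B ⊆ D be nonempty with B' := D \ B, and define g : I^d → ℝ by g(x) := ∏_{i∈B} D_{2^{2n+1}}(x_i)/2. There exists a constant c > 0 depending only on d such that for every n ≥ m_0, ‖(L_{p_n(B)}∘R_{p_n(B')})(g)‖_{L^1(I^d)} ≥ c·n^{|B|}, where p_n(B) denotes the index vector all of whose coordinates equal p_n. -/

import Mathlib

open MeasureTheory Filter

noncomputable section

/-- The unit cube `[0,1)^d`. -/
def unitCube (d : ℕ) : Set (Fin d → ℝ) := Set.univ.pi fun _ => Set.Ico (0:ℝ) 1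

/-- Lebesgue measure restricted to the unit cube `[0,1)^d`. -/
def cubeMeasure (d : ℕ) : Measure (Fin d → ℝ) := volume.restrict (unitCube d)

/-- The `1`-periodic function equal to `1` on `[0,1/2)` and to `-1` on `[1/2,1)`. -/
def r0 (x : ℝ) : ℝ := if Int.fract x < 1/2 then 1 else -1

/-- The Rademacher functions. -/
def rademacher (n : ℕ) (x : ℝ) : ℝ := r0 (2 ^ n * x)

/-- The Walsh functions (in Paley enumeration, via binary digits). -/
def walsh (n : ℕ) (x : ℝ) : ℝ :=
  ∏ k ∈ Finset.range (n + 1), if n.testBit k then rademacher k x else 1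

/-- The Walsh–Dirichlet kernel `D_n`. -/
def dirichletKernel (n : ℕ) (x : ℝ) : ℝ := ∑ k ∈ Finset.range n, walsh k x

/-- `l_n = ∑_{k=1}^{n-1} 1/k`. -/
def logSum (n : ℕ) : ℝ := ∑ k ∈ Finset.Icc 1 (n - 1), (1 : ℝ) / k

/-- The Nörlund logarithmic kernel `F_n`. -/
def FKernel (n : ℕ) (u : ℝ) : ℝ :=
  (1 / logSum n) * ∑ i ∈ Finset.Ico 1 n, dirichletKernel (n - i) u / i

/-- The Riesz logarithmic kernel `G_n`. -/
def GKernel (n : ℕ) (u : ℝ) : ℝ :=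
  (1 / logSum n) * ∑ i ∈ Finset.Ico 1 n, dirichletKernel i u / i

/-- Walsh–Fourier coefficient of `f` on the unit cube. -/
def walshCoef {d : ℕ} (f : (Fin d → ℝ) → ℝ) (j : Fin d → ℕ) : ℝ :=
  ∫ x, f x * ∏ i, walsh (j i) (x i) ∂(cubeMeasure d)

/-- Rectangular partial sums of the multiple Walsh–Fourier series. -/
def rectPartialSum {d : ℕ} (f : (Fin d → ℝ) → ℝ) (N : Fin d → ℕ) (x : Fin d → ℝ) : ℝ :=
  ∑ j ∈ Fintype.piFinset (fun i => Finset.range (N i)),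
    walshCoef f j * ∏ i, walsh (j i) (x i)

/-- The mixed logarithmic means `(L_{n_B} ∘ R_{n_{B'}})(f)`. -/
def mixedLogMean {d : ℕ} (B : Finset (Fin d)) (f : (Fin d → ℝ) → ℝ)
    (n : Fin d → ℕ) (x : Fin d → ℝ) : ℝ :=
  (∏ j, logSum (n j))⁻¹ *
    ∑ i ∈ Fintype.piFinset (fun j => Finset.Ico 1 (n j)),
      rectPartialSum f (fun j => if j ∈ B then n j - i j else i j) x / ∏ j, (i j : ℝ)

/-- A Young function: convex, continuous, even, vanishing at `0`, with
`Q(u)/u → ∞` at `+∞` and `Q(u)/u → 0` at `0`. -/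
structure YoungFunction where
  toFun : ℝ → ℝ
  nonneg : ∀ u, 0 ≤ toFun u
  convexOn : ConvexOn ℝ Set.univ toFun
  continuous : Continuous toFun
  even : ∀ u, toFun (-u) = toFun u
  map_zero : toFun 0 = 0
  tendsto_atTop : Tendsto (fun u => toFun u / u) atTop atTop
  tendsto_zero : Tendsto (fun u => toFun u / u) (nhdsWithin 0 {(0:ℝ)}ᶜ) (nhds 0)

/-- The set of admissible constants `k` in the Luxemburg norm of `f`. -/
def orliczSet {d : ℕ} (Q : YoungFunction) (f : (Fin d → ℝ) → ℝ) : Set ℝ :=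
  {k | 0 < k ∧ Integrable (fun x => Q.toFun (|f x| / k)) (cubeMeasure d) ∧
    ∫ x, Q.toFun (|f x| / k) ∂(cubeMeasure d) ≤ 1}

/-- `f` belongs to the Orlicz space `L_Q(I^d)`. -/
def MemOrlicz {d : ℕ} (Q : YoungFunction) (f : (Fin d → ℝ) → ℝ) : Prop :=
  Measurable f ∧ (orliczSet Q f).Nonempty

/-- The Luxemburg norm on the Orlicz space `L_Q(I^d)`. -/
def orliczNorm {d : ℕ} (Q : YoungFunction) (f : (Fin d → ℝ) → ℝ) : ℝ :=
  sInf (orliczSet Q f)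

/-- `p_n = 2^{2n} + 2^{2n-2} + ⋯ + 2^0`. -/
def pIdx (n : ℕ) : ℕ := ∑ k ∈ Finset.range (n + 1), 4 ^ k

/-- `m̃ = ⌊ l_{p_{⌊m/2⌋}-1}/16 - 2^15 ⌋`. -/
def mTilde (m : ℕ) : ℤ := ⌊logSum (pIdx (m / 2) - 1) / 16 - 2 ^ 15⌋

/-- `m₀ = min{m : m̃ > 1}`. -/
def m₀ : ℕ := sInf {m : ℕ | 1 < mTilde m}

/-- The set `Ω_n`. -/
def Omega (n : ℕ) : Set ℝ :=
  ⋃ m ∈ Finset.Icc n (2 * n),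
    Set.Ico ((2:ℝ) ^ (-(m:ℤ) - 1) + (2:ℝ) ^ (-(m:ℤ) - mTilde m)) ((2:ℝ) ^ (-(m:ℤ)))

/-- `k`-th binary digit of `x` (the expansion not terminating in `1`'s). -/
def binDigit (k : ℕ) (x : ℝ) : ℕ := (⌊x * 2 ^ (k + 1)⌋).toNat % 2

/-- Dyadic addition on `[0,1)`. -/
def dyadicAdd (x t : ℝ) : ℝ :=
  ∑' k : ℕ, |(binDigit k x : ℝ) - (binDigit k t : ℝ)| / 2 ^ (k + 1)

/-- Dyadic convolution `f ∗ K` on `[0,1)`. -/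
def dyadicConv (f K : ℝ → ℝ) (x : ℝ) : ℝ :=
  ∫ t in Set.Ico (0:ℝ) 1, f t * K (dyadicAdd x t)

/-- Lebesgue measure restricted to `[0,1)`. -/
def unitMeasure : Measure ℝ := volume.restrict (Set.Ico (0:ℝ) 1)

/-- A set `A ⊆ L_Q(I^d)` is nowhere dense w.r.t. the Luxemburg norm. -/
def OrliczNowhereDense {d : ℕ} (Q : YoungFunction) (A : Set ((Fin d → ℝ) → ℝ)) : Prop :=
  ∀ f, MemOrlicz Q f → ∀ ε > 0, ∃ g, MemOrlicz Q g ∧ ∃ δ > 0,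
    (∀ h, MemOrlicz Q h → orliczNorm Q (h - g) < δ → orliczNorm Q (h - f) < ε) ∧
    (∀ h, MemOrlicz Q h → orliczNorm Q (h - g) < δ → h ∉ A)

/-- A set `A ⊆ L_Q(I^d)` is of first Baire category (meager) w.r.t. the Luxemburg norm. -/
def OrliczMeager {d : ℕ} (Q : YoungFunction) (A : Set ((Fin d → ℝ) → ℝ)) : Prop :=
  ∃ F : ℕ → Set ((Fin d → ℝ) → ℝ), (∀ k, OrliczNowhereDense Q (F k)) ∧ A ⊆ ⋃ k, F k


lemma rad_sq (k : ℕ) (x : ℝ) : rademacher k x * rademacher k x = 1 := by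
  unfold rademacher r0; split_ifs <;> norm_num

lemma rad_cases (k : ℕ) (x : ℝ) : rademacher k x = 1 ∨ rademacher k x = -1 := by
  unfold rademacher r0; split_ifs <;> simp

lemma r0_meas : Measurable r0 := by
  unfold r0
  exact Measurable.ite (measurableSet_lt measurable_fract measurable_const)
    measurable_const measurable_const

lemma rad_meas (k : ℕ) : Measurable (rademacher k) :=
  r0_meas.comp (measurable_const.mul measurable_id)

lemma walsh_meas (n : ℕ) : Measurable (walsh n) := by
  unfold walsh
  refine Finset.measurable_prod _ fun k _ => ?_
  split_ifs
  · exact rad_meas k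
  · exact measurable_const

lemma walsh_abs (n : ℕ) (x : ℝ) : |walsh n x| = 1 := by
  unfold walsh
  rw [Finset.abs_prod]
  refine Finset.prod_eq_one fun k _ => ?_
  split_ifs
  · rcases rad_cases k x with h | h <;> simp [h]
  · simp

/-- the product may be taken over any sufficiently long range -/
lemma walsh_eq {n N : ℕ} (h : n < 2 ^ N) (x : ℝ) :
    walsh n x = ∏ k ∈ Finset.range N, if n.testBit k then rademacher k x else 1 := by
  have key : ∀ M M' : ℕ, n < 2 ^ M → M ≤ M' →
      (∏ k ∈ Finset.range M, if n.testBit k then rademacher k x else 1) =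
      ∏ k ∈ Finset.range M', if n.testBit k then rademacher k x else 1 := by
    intro M M' hM hMM
    refine Finset.prod_subset (Finset.range_subset_range.2 hMM) fun k _ hk => ?_
    have hk' : M ≤ k := by simpa using hk
    have : n.testBit k = false :=
      Nat.testBit_lt_two_pow (hM.trans_le (Nat.pow_le_pow_right (by norm_num) hk'))
    simp [this]
  unfold walsh
  have h1 : n < 2 ^ (n + 1) := (Nat.lt_two_pow_self).trans (Nat.pow_lt_pow_right (by norm_num) (by omega))
  rcases le_total (n + 1) N with h2 | h2
  · exact key _ _ h1 h2
  · exact (key _ _ h h2).symm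

lemma walsh_xor (j k : ℕ) (x : ℝ) : walsh (j ^^^ k) x = walsh j x * walsh k x := by
  have hj : j < 2 ^ (j + k) := (Nat.lt_two_pow_self).trans_le (Nat.pow_le_pow_right (by norm_num) (by omega))
  have hk : k < 2 ^ (j + k) := (Nat.lt_two_pow_self).trans_le (Nat.pow_le_pow_right (by norm_num) (by omega))
  rw [walsh_eq (Nat.xor_lt_two_pow hj hk), walsh_eq hj, walsh_eq hk, ← Finset.prod_mul_distrib]
  refine Finset.prod_congr rfl fun i _ => ?_
  rw [Nat.testBit_xor]
  cases j.testBit i <;> cases k.testBit i <;> simp [rad_sq]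

lemma walsh_zero (x : ℝ) : walsh 0 x = 1 := by simp [walsh]

lemma walsh_add (m q i : ℕ) (hi : i < 2 ^ m) (x : ℝ) :
    walsh (2 ^ m * q + i) x = walsh (2 ^ m * q) x * walsh i x := by
  rw [← walsh_xor]
  congr 1
  apply Nat.eq_of_testBit_eq
  intro j
  rw [Nat.testBit_xor, Nat.testBit_two_pow_mul_add _ hi, Nat.testBit_two_pow_mul]
  split_ifs with h
  · have : ¬ (m ≤ j) := by omega
    simp [this]
  · have h' : m ≤ j := by omega
    have : i.testBit j = false :=
      Nat.testBit_lt_two_pow (hi.trans_le (Nat.pow_le_pow_right (by norm_num) h'))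
    simp [h', this]

lemma walsh_two_pow (m : ℕ) (x : ℝ) : walsh (2 ^ m) x = rademacher m x := by
  rw [walsh_eq (N := m + 1) (Nat.pow_lt_pow_right (by norm_num) (by omega)),
    Finset.prod_eq_single m]
  · simp [Nat.testBit_two_pow_self]
  · intro b _ hb
    simp [Ne.symm hb]
  · simp

lemma walsh_two_pow_add (m i : ℕ) (hi : i < 2 ^ m) (x : ℝ) :
    walsh (2 ^ m + i) x = rademacher m x * walsh i x := by
  have := walsh_add m 1 i hi x
  rwa [mul_one, walsh_two_pow] at this

lemma dir_two_pow (m : ℕ) (x : ℝ) :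
    dirichletKernel (2 ^ m) x = ∏ k ∈ Finset.range m, (1 + rademacher k x) := by
  induction m with
  | zero => simp [dirichletKernel, walsh_zero]
  | succ m ih =>
    rw [Finset.prod_range_succ, ← ih]
    unfold dirichletKernel
    rw [pow_succ, mul_two, Finset.sum_range_add,
      Finset.sum_congr rfl (fun i hi => walsh_two_pow_add m i (Finset.mem_range.1 hi) x),
      ← Finset.mul_sum]
    ring

lemma rad_add_int (k : ℕ) (x t : ℝ) (z : ℤ) (h : (2:ℝ) ^ k * t = z) :
    rademacher k (x + t) = rademacher k x := by
  unfold rademacher r0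
  rw [mul_add, h, Int.fract_add_intCast]

lemma r0_half (x : ℝ) : r0 (x + 1/2) = - r0 x := by
  unfold r0
  have h0 := Int.fract_nonneg x
  have h1 := Int.fract_lt_one x
  by_cases h : Int.fract x < 1/2
  · have : Int.fract (x + 1/2) = Int.fract x + 1/2 := by
      rw [Int.fract_eq_iff]
      refine ⟨by linarith, by linarith, ⌊x⌋, ?_⟩
      rw [← Int.self_sub_floor]; ring
    rw [if_pos h, if_neg (by rw [this]; linarith)]
  · have : Int.fract (x + 1/2) = Int.fract x - 1/2 := by
      rw [Int.fract_eq_iff]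
      refine ⟨by linarith, by linarith, ⌊x⌋ + 1, ?_⟩
      rw [← Int.self_sub_floor]; push_cast; ring
    rw [if_neg h, if_pos (by rw [this]; linarith)]; norm_num

lemma walsh_periodic (n : ℕ) : Function.Periodic (walsh n) 1 := by
  intro x
  unfold walsh
  refine Finset.prod_congr rfl fun k _ => ?_
  rw [rad_add_int k x 1 (2 ^ k) (by push_cast; ring)]

lemma walsh_shift (n : ℕ) (hn : n ≠ 0) : ∃ t : ℝ, ∀ x, walsh n (x + t) = - walsh n x := by
  classical
  have hex : ∃ m, n.testBit m = true := by
    by_contra hcon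
    push Not at hcon
    exact hn (Nat.eq_of_testBit_eq fun i => by simpa using hcon i)
  set m := Nat.find hex with hm
  have hm1 : n.testBit m = true := Nat.find_spec hex
  have hm2 : ∀ k, k < m → n.testBit k = false := fun k hk => by
    simpa using Nat.find_min hex hk
  refine ⟨1 / 2 ^ (m + 1), fun x => ?_⟩
  have hmem : m ∈ Finset.range (n + 1) := by
    have := Nat.ge_two_pow_of_testBit hm1
    have := (Nat.lt_two_pow_self (n := m))
    simp; omega
  unfold walsh
  rw [← Finset.mul_prod_erase _ _ hmem, ← Finset.mul_prod_erase _ _ hmem, ← neg_mul]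
  congr 1
  · simp only [hm1, if_true]
    unfold rademacher
    rw [← r0_half, mul_add]
    congr 2
    field_simp
    ring
  · refine Finset.prod_congr rfl fun k hk => ?_
    have hkm : k ≠ m := (Finset.mem_erase.1 hk).1
    split_ifs with hb
    · have : m + 1 ≤ k := by
        by_contra hlt
        have := hm2 k (by omega)
        simp [this] at hb
      obtain ⟨e, rfl⟩ := Nat.exists_eq_add_of_le this
      apply rad_add_int _ _ _ (2 ^ e)
      push_cast
      rw [pow_add]
      field_simp
    · rfl

lemma integral_unit (f : ℝ → ℝ) : ∫ x, f x ∂unitMeasure = ∫ x in (0:ℝ)..1, f x := by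
  unfold unitMeasure
  rw [intervalIntegral.integral_of_le zero_le_one, integral_Ico_eq_integral_Ioc]

instance : IsProbabilityMeasure unitMeasure := ⟨by simp [unitMeasure]⟩

lemma walsh_int (n : ℕ) : ∫ x, walsh n x ∂unitMeasure = if n = 0 then 1 else 0 := by
  split_ifs with h
  · subst h; simp [walsh_zero]
  · obtain ⟨t, ht⟩ := walsh_shift n h
    have h1 : ∫ x in (0:ℝ)..1, walsh n (x + t) = ∫ x in (0:ℝ)..1, walsh n x := by
      rw [intervalIntegral.integral_comp_add_right]
      have := (walsh_periodic n).intervalIntegral_add_eq t 0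
      rw [zero_add] at this
      rw [← this, zero_add, add_comm]
    simp only [ht, intervalIntegral.integral_neg] at h1
    rw [integral_unit]
    linarith

lemma walsh_orth (j k : ℕ) :
    ∫ x, walsh j x * walsh k x ∂unitMeasure = if j = k then 1 else 0 := by
  simp only [← walsh_xor, walsh_int, Nat.xor_eq_zero_iff]

lemma bdd_int {f : ℝ → ℝ} (hf : Measurable f) (C : ℝ) (h : ∀ x, |f x| ≤ C) :
    Integrable f unitMeasure :=
  Integrable.of_bound hf.aestronglyMeasurable C (Filter.Eventually.of_forall h)

lemma walsh_mul_int (j k : ℕ) : Integrable (fun x => walsh j x * walsh k x) unitMeasure :=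
  bdd_int ((walsh_meas j).mul (walsh_meas k)) 1 (fun x => by simp [abs_mul, walsh_abs])

lemma dir_orth (N k : ℕ) :
    ∫ x, dirichletKernel N x * walsh k x ∂unitMeasure = if k < N then 1 else 0 := by
  unfold dirichletKernel
  simp only [Finset.sum_mul]
  rw [integral_finsetSum _ (fun i _ => walsh_mul_int i k)]
  simp [walsh_orth]

lemma dir_meas (N : ℕ) : Measurable (dirichletKernel N) := by
  unfold dirichletKernel
  exact Finset.measurable_sum _ fun k _ => walsh_meas k

lemma dir_abs (N : ℕ) (x : ℝ) : |dirichletKernel N x| ≤ N := by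
  unfold dirichletKernel
  refine (Finset.abs_sum_le_sum_abs _ _).trans ?_
  simp [walsh_abs]

/-- unnormalized Nörlund kernel -/
def HK (p : ℕ) (x : ℝ) : ℝ := ∑ i ∈ Finset.Ico 1 p, dirichletKernel (p - i) x / i

lemma HK_meas (p : ℕ) : Measurable (HK p) := by
  unfold HK
  exact Finset.measurable_sum _ fun k _ => (dir_meas _).div_const _

lemma HK_bdd (p : ℕ) : ∃ C, ∀ x, |HK p x| ≤ C := by
  refine ⟨∑ i ∈ Finset.Ico 1 p, ((p - i : ℕ) : ℝ) / i, fun x => ?_⟩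
  refine (Finset.abs_sum_le_sum_abs _ _).trans (Finset.sum_le_sum fun i _ => ?_)
  rw [abs_div, Nat.abs_cast]
  gcongr
  exact dir_abs _ _

lemma HK_coef (p m : ℕ) : ∫ x, HK p x * walsh m x ∂unitMeasure = logSum (p - m) := by
  unfold HK
  simp only [Finset.sum_mul]
  rw [integral_finsetSum]
  · have : ∀ i ∈ Finset.Ico 1 p, ∫ x, dirichletKernel (p - i) x / i * walsh m x ∂unitMeasure
        = if m < p - i then (1:ℝ) / i else 0 := by
      intro i _
      simp only [div_mul_eq_mul_div]
      rw [integral_div, dir_orth]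
      split_ifs <;> simp
    rw [Finset.sum_congr rfl this, ← Finset.sum_filter]
    unfold logSum
    congr 1
    ext i
    simp only [Finset.mem_filter, Finset.mem_Ico, Finset.mem_Icc]
    omega
  · intro i _
    refine bdd_int (((dir_meas _).div_const _).mul (walsh_meas m)) ((p - i : ℕ) / i) fun x => ?_
    rw [abs_mul, walsh_abs, mul_one, abs_div, Nat.abs_cast]
    gcongr
    exact dir_abs _ _

lemma logSum_mono {a b : ℕ} (h : a ≤ b) : logSum a ≤ logSum b := by
  unfold logSum
  refine Finset.sum_le_sum_of_subset_of_nonneg ?_ fun i _ _ => by positivity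
  exact Finset.Icc_subset_Icc le_rfl (by omega)

lemma logSum_nonneg (a : ℕ) : 0 ≤ logSum a := Finset.sum_nonneg fun i _ => by positivity

lemma logSum_succ (a : ℕ) : logSum (a + 1) = (harmonic a : ℝ) := by
  unfold logSum
  rw [harmonic_eq_sum_Icc]
  push_cast
  simp

lemma pIdx_succ (n : ℕ) : pIdx (n + 1) = pIdx n + 4 ^ (n + 1) := by
  unfold pIdx; rw [Finset.sum_range_succ]

lemma pIdx_three (n : ℕ) : 3 * pIdx n + 1 = 4 ^ (n + 1) := by
  induction n with
  | zero => simp [pIdx]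
  | succ n ih => rw [pIdx_succ, pow_succ 4 (n+1)]; omega

lemma pIdx_ge (n : ℕ) : 4 ^ n ≤ pIdx n := by
  have := pIdx_three n
  rw [pow_succ] at this
  have := Nat.one_le_pow n 4 (by norm_num)
  omega

lemma pIdx_split (a e : ℕ) : ∃ q, pIdx (a + e) = pIdx a + 2 ^ (2 * a + 2) * q := by
  induction e with
  | zero => exact ⟨0, by simp⟩
  | succ e ih =>
    obtain ⟨q, hq⟩ := ih
    refine ⟨q + 4 ^ e, ?_⟩
    rw [← add_assoc, pIdx_succ, hq, show 2 * a + 2 = 2 * (a + 1) by ring, pow_mul,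
      show a + e + 1 = (a + 1) + e by ring, pow_add]
    norm_num
    ring

lemma log_lower (k : ℕ) : ((k:ℝ) + 1) / 2 ≤ logSum (pIdx k + 1) := by
  rw [logSum_succ]
  refine le_trans ?_ (log_add_one_le_harmonic _)
  have h1 : (2:ℝ) ^ (k + 1) ≤ ((pIdx k + 1 : ℕ) : ℝ) := by
    have h2 : ((4:ℝ) ^ k) ≤ (pIdx k : ℝ) := by exact_mod_cast pIdx_ge k
    have h3 : (4:ℝ) ^ k = 2 ^ k * 2 ^ k := by rw [← mul_pow]; norm_num
    push_cast
    rw [pow_succ]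
    nlinarith [sq_nonneg ((2:ℝ) ^ k - 1)]
  have h4 := Real.log_le_log (by positivity) h1
  rw [Real.log_pow] at h4
  push_cast at h4 ⊢
  have := Real.log_two_gt_d9
  have hk : (0:ℝ) ≤ k := Nat.cast_nonneg k
  nlinarith

lemma log_upper (n : ℕ) (hn : 1 ≤ n) : logSum (pIdx n) ≤ 5 * n := by
  refine (logSum_mono (Nat.le_succ _)).trans ?_
  rw [logSum_succ]
  refine (harmonic_le_one_add_log _).trans ?_
  have h0 : (0:ℝ) < pIdx n := by
    exact_mod_cast lt_of_lt_of_le (by positivity) (pIdx_ge n)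
  have h1 : (pIdx n : ℝ) ≤ 2 ^ (2 * n + 1) := by
    have := pIdx_three n
    have h : 3 * pIdx n ≤ 2 * (2 * 2 ^ (2 * n)) := by
      rw [pow_succ] at this
      rw [pow_mul]; norm_num; omega
    have h' : pIdx n ≤ 2 ^ (2 * n + 1) := by
      rw [pow_succ]; omega
    exact_mod_cast h'
  have h4 := Real.log_le_log h0 h1
  rw [Real.log_pow] at h4
  push_cast at h4
  have := Real.log_two_lt_d9
  have hk : (1:ℝ) ≤ n := by exact_mod_cast hn
  nlinarith

lemma logSum_pos (n : ℕ) (hn : 1 ≤ n) : 0 < logSum (pIdx n) := by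
  obtain ⟨k, rfl⟩ : ∃ k, n = k + 1 := ⟨n - 1, by omega⟩
  have h1 := log_lower k
  have h2 : logSum (pIdx k + 1) ≤ logSum (pIdx (k + 1)) := by
    apply logSum_mono
    rw [pIdx_succ]
    have := Nat.one_le_pow (k+1) 4 (by norm_num)
    omega
  have : (0:ℝ) ≤ k := Nat.cast_nonneg k
  linarith

/-- test function on the block `a` -/
def phi (P a : ℕ) (x : ℝ) : ℝ :=
  (1 / (2 * 4 ^ a)) * ∑ i ∈ Finset.range (4 ^ a), (walsh (P + i) x - walsh (P + (4 ^ a + i)) x)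

lemma phi_meas (P a : ℕ) : Measurable (phi P a) := by
  unfold phi
  exact (Finset.measurable_sum _ fun k _ => (walsh_meas _).sub (walsh_meas _)).const_mul _

lemma phi_abs (q a : ℕ) (x : ℝ) : |phi (2 ^ (2 * a + 2) * q) a x| =
    (1 - (1 + rademacher (2 * a) x) / 2) * ∏ k ∈ Finset.range (2 * a), ((1 + rademacher k x) / 2) := by
  have h4 : 4 ^ a = 2 ^ (2 * a) := by rw [pow_mul]; norm_num
  have h4' : (4:ℝ) ^ a = 2 ^ (2 * a) := by rw [pow_mul]; norm_num
  have hlt1 : (2:ℕ) ^ (2 * a + 2) = 4 * 2 ^ (2 * a) := by ring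
  have e : phi (2 ^ (2 * a + 2) * q) a x = walsh (2 ^ (2 * a + 2) * q) x *
      ((1 - (1 + rademacher (2 * a) x) / 2) *
        ∏ k ∈ Finset.range (2 * a), ((1 + rademacher k x) / 2)) := by
    unfold phi
    rw [Finset.prod_div_distrib, ← dir_two_pow, Finset.prod_const, Finset.card_range, h4, h4']
    have : ∀ i ∈ Finset.range (2 ^ (2 * a)),
        walsh (2 ^ (2 * a + 2) * q + i) x - walsh (2 ^ (2 * a + 2) * q + (2 ^ (2 * a) + i)) x
        = walsh (2 ^ (2 * a + 2) * q) x * (1 - rademacher (2 * a) x) * walsh i x := by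
      intro i hi
      have hi' := Finset.mem_range.1 hi
      rw [walsh_add _ _ _ (by omega), walsh_add _ _ _ (by omega), walsh_two_pow_add _ _ hi']
      ring
    rw [Finset.sum_congr rfl this, ← Finset.mul_sum]
    unfold dirichletKernel
    field_simp
    ring
  rw [e, abs_mul, walsh_abs, one_mul, abs_of_nonneg]
  refine mul_nonneg ?_ (Finset.prod_nonneg fun k _ => ?_)
  · rcases rad_cases (2 * a) x with h | h <;> simp [h]
  · rcases rad_cases k x with h | h <;> simp [h]

lemma tele (e : ℕ → ℝ) (h0 : ∀ k, 0 ≤ e k) (h1 : ∀ k, e k ≤ 1) (N : ℕ) :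
    ∑ a ∈ Finset.range N, (1 - e (2 * a)) * ∏ k ∈ Finset.range (2 * a), e k
      ≤ 1 - ∏ k ∈ Finset.range (2 * N), e k := by
  induction N with
  | zero => simp
  | succ N ih =>
    rw [Finset.sum_range_succ, show 2 * (N + 1) = 2 * N + 1 + 1 by ring,
      Finset.prod_range_succ, Finset.prod_range_succ]
    have hp : 0 ≤ (∏ k ∈ Finset.range (2 * N), e k) * e (2 * N) :=
      mul_nonneg (Finset.prod_nonneg fun k _ => h0 k) (h0 _)
    nlinarith [mul_le_mul_of_nonneg_left (h1 (2 * N + 1)) hp]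

lemma phi_sum (q : ℕ → ℕ) (N : ℕ) (x : ℝ) :
    ∑ a ∈ Finset.range N, |phi (2 ^ (2 * a + 2) * q a) a x| ≤ 1 := by
  simp only [phi_abs]
  refine (tele (fun k => (1 + rademacher k x) / 2) ?_ ?_ N).trans ?_
  · intro k; rcases rad_cases k x with h | h <;> simp [h]
  · intro k; rcases rad_cases k x with h | h <;> simp [h]
  · rw [sub_le_self_iff]
    refine Finset.prod_nonneg fun k _ => ?_
    rcases rad_cases k x with h | h <;> simp [h]

lemma HKw_int (p m : ℕ) : Integrable (fun x => HK p x * walsh m x) unitMeasure := by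
  obtain ⟨C, hC⟩ := HK_bdd p
  exact bdd_int ((HK_meas p).mul (walsh_meas m)) C fun x => by
    rw [abs_mul, walsh_abs, mul_one]; exact hC x

lemma phi_coef (p P a : ℕ) : ∫ x, HK p x * phi P a x ∂unitMeasure =
    (1 / (2 * 4 ^ a)) * ∑ i ∈ Finset.range (4 ^ a),
      (logSum (p - (P + i)) - logSum (p - (P + (4 ^ a + i)))) := by
  have : ∀ x, HK p x * phi P a x = (1 / (2 * 4 ^ a)) * ∑ i ∈ Finset.range (4 ^ a),
      (HK p x * walsh (P + i) x - HK p x * walsh (P + (4 ^ a + i)) x) := by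
    intro x
    unfold phi
    rw [mul_left_comm, Finset.mul_sum]
    simp only [mul_sub]
  simp only [this]
  rw [integral_const_mul, integral_finsetSum]
  swap
  · exact fun i _ => (HKw_int p _).sub (HKw_int p _)
  congr 1
  refine Finset.sum_congr rfl fun i _ => ?_
  rw [integral_sub (HKw_int p _) (HKw_int p _), HK_coef, HK_coef]

lemma block (p P b : ℕ) (hp : p = pIdx (b + 1) + P) :
    ((b:ℝ) + 1) / 6 ≤ ∫ x, HK p x * phi P (b + 1) x ∂unitMeasure := by
  rw [phi_coef, Finset.sum_sub_distrib]
  have hs := pIdx_succ b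
  have h3 := pIdx_three b
  have hL := log_lower b
  set L := logSum (pIdx b + 1) with hLdef
  have hL0 : 0 ≤ L := logSum_nonneg _
  have A : (4:ℝ) ^ (b + 1) * L ≤ ∑ i ∈ Finset.range (4 ^ (b + 1)), logSum (p - (P + i)) := by
    have : ∑ i ∈ Finset.range (4 ^ (b + 1)), L ≤
        ∑ i ∈ Finset.range (4 ^ (b + 1)), logSum (p - (P + i)) := by
      refine Finset.sum_le_sum fun i hi => logSum_mono ?_
      have := Finset.mem_range.1 hi
      omega
    simpa using this
  have Bd : ∑ i ∈ Finset.range (4 ^ (b + 1)), logSum (p - (P + (4 ^ (b + 1) + i)))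
      ≤ (4:ℝ) ^ (b + 1) / 3 * L := by
    have h1 : ∑ i ∈ Finset.range (4 ^ (b + 1)), logSum (p - (P + (4 ^ (b + 1) + i)))
        ≤ ∑ i ∈ Finset.range (4 ^ (b + 1)), if i < pIdx b then L else 0 := by
      refine Finset.sum_le_sum fun i _ => ?_
      split_ifs with h
      · exact logSum_mono (by omega)
      · have : p - (P + (4 ^ (b + 1) + i)) = 0 := by omega
        rw [this]; simp [logSum]
    refine h1.trans ?_
    rw [← Finset.sum_filter, Finset.sum_const, nsmul_eq_mul]
    have hc : (Finset.filter (fun i => i < pIdx b) (Finset.range (4 ^ (b + 1)))).card ≤ pIdx b := by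
      refine (Finset.card_le_card (t := Finset.range (pIdx b)) ?_).trans (by simp)
      intro i hi
      simpa using (Finset.mem_filter.1 hi).2
    have hc' : ((Finset.filter (fun i => i < pIdx b) (Finset.range (4 ^ (b + 1)))).card : ℝ)
        ≤ pIdx b := by exact_mod_cast hc
    have h3' : 3 * (pIdx b : ℝ) + 1 = 4 ^ (b + 1) := by exact_mod_cast h3
    exact mul_le_mul_of_nonneg_right (by linarith) hL0
  have hX : (0:ℝ) < 4 ^ (b + 1) := by positivity
  rw [one_div, inv_mul_eq_div, le_div_iff₀ (by positivity)]
  nlinarith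

lemma HK_norm (n : ℕ) : (n:ℝ) ^ 2 / 12 ≤ ∫ x, |HK (pIdx n) x| ∂unitMeasure := by
  obtain ⟨C, hC⟩ := HK_bdd (pIdx n)
  have hq : ∀ a, ∃ q, a ≤ n → pIdx n = pIdx a + 2 ^ (2 * a + 2) * q := by
    intro a
    by_cases h : a ≤ n
    · obtain ⟨e, rfl⟩ := Nat.exists_eq_add_of_le h
      obtain ⟨q, hq⟩ := pIdx_split a e
      exact ⟨q, fun _ => hq⟩
    · exact ⟨0, fun h' => absurd h' h⟩
  choose q hq using hq
  have phi1 : ∀ a x, |phi (2 ^ (2 * a + 2) * q a) a x| ≤ 1 := fun a x =>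
    (Finset.single_le_sum (f := fun a => |phi (2 ^ (2 * a + 2) * q a) a x|)
      (fun _ _ => abs_nonneg _) (Finset.self_mem_range_succ a)).trans (phi_sum q (a+1) x)
  have hint : ∀ a, Integrable (fun x => HK (pIdx n) x * phi (2 ^ (2 * a + 2) * q a) a x)
      unitMeasure := fun a => by
    refine bdd_int ((HK_meas _).mul (phi_meas _ _)) C fun x => ?_
    rw [abs_mul]
    exact (mul_le_of_le_one_right (abs_nonneg _) (phi1 a x)).trans (hC x)
  have h1 : ∑ b ∈ Finset.range n, ((b:ℝ) + 1) / 6 ≤ ∑ b ∈ Finset.range n,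
      ∫ x, HK (pIdx n) x * phi (2 ^ (2 * (b + 1) + 2) * q (b + 1)) (b + 1) x ∂unitMeasure :=
    Finset.sum_le_sum fun b hb => block _ _ _ (hq _ (by have := Finset.mem_range.1 hb; omega))
  rw [← integral_finsetSum _ (fun b _ => hint (b + 1))] at h1
  have h2 : (n:ℝ) ^ 2 / 12 ≤ ∑ b ∈ Finset.range n, ((b:ℝ) + 1) / 6 := by
    clear * -
    induction n with
    | zero => simp
    | succ n ih => rw [Finset.sum_range_succ]; push_cast; nlinarith
  refine h2.trans (h1.trans ?_)
  refine integral_mono (integrable_finsetSum _ fun b _ => hint (b + 1))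
    (bdd_int (continuous_abs.measurable.comp (HK_meas _)) C fun x => by simpa using hC x) fun x => ?_
  simp only
  rw [← Finset.mul_sum]
  refine (le_abs_self _).trans ?_
  rw [abs_mul]
  refine mul_le_of_le_one_right (abs_nonneg _) ((Finset.abs_sum_le_sum_abs _ _).trans ?_)
  have := phi_sum q (n + 1) x
  rw [Finset.sum_range_succ'] at this
  linarith [abs_nonneg (phi (2 ^ (2 * 0 + 2) * q 0) 0 x)]

lemma F_norm (n : ℕ) (hn : 1 ≤ n) :
    (n:ℝ) / 60 ≤ ∫ x, |(logSum (pIdx n))⁻¹ * HK (pIdx n) x| ∂unitMeasure := by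
  have hl := logSum_pos n hn
  simp only [abs_mul, abs_of_pos (inv_pos.2 hl)]
  rw [integral_const_mul, inv_mul_eq_div, le_div_iff₀ hl]
  refine le_trans ?_ (HK_norm n)
  have := log_upper n hn
  have : (n:ℝ) / 60 * logSum (pIdx n) ≤ n / 60 * (5 * n) := by gcongr
  linarith

lemma cube_eq (d : ℕ) : cubeMeasure d = Measure.pi (fun _ : Fin d => unitMeasure) := by
  unfold cubeMeasure unitCube unitMeasure
  rw [volume_pi, Measure.restrict_pi_pi]

lemma coef_eq {d : ℕ} (B : Finset (Fin d)) (M : ℕ) (j : Fin d → ℕ) :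
    walshCoef (fun y => ∏ i ∈ B, dirichletKernel M (y i) / 2) j =
      ∏ i, (if i ∈ B then (if j i < M then (1:ℝ) / 2 else 0) else if j i = 0 then 1 else 0) := by
  unfold walshCoef
  rw [cube_eq]
  have : ∀ x : Fin d → ℝ, (∏ i ∈ B, dirichletKernel M (x i) / 2) * ∏ i, walsh (j i) (x i) =
      ∏ i, ((fun (i : Fin d) (t : ℝ) => (if i ∈ B then dirichletKernel M t / 2 else 1) * walsh (j i) t) i (x i)) := by
    intro x
    simp only [Finset.prod_mul_distrib, Finset.prod_ite_mem, Finset.univ_inter]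
  simp only [this]
  rw [integral_fintype_prod_eq_prod
    (fun (i : Fin d) (t : ℝ) => (if i ∈ B then dirichletKernel M t / 2 else 1) * walsh (j i) t)]
  refine Finset.prod_congr rfl fun i _ => ?_
  by_cases h : i ∈ B
  · simp only [h, if_true, div_mul_eq_mul_div]
    rw [integral_div, dir_orth]
    split_ifs <;> simp
  · simp [h, walsh_int]

lemma partial_eq {d : ℕ} (B : Finset (Fin d)) (M : ℕ) (N : Fin d → ℕ) (hN : ∀ i, 1 ≤ N i)
    (hM : ∀ i, N i ≤ M) (x : Fin d → ℝ) :
    rectPartialSum (fun y => ∏ i ∈ B, dirichletKernel M (y i) / 2) N x =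
      ∏ i, (if i ∈ B then dirichletKernel (N i) (x i) / 2 else 1) := by
  unfold rectPartialSum
  simp only [coef_eq, ← Finset.prod_mul_distrib]
  rw [← Finset.prod_univ_sum (fun i => Finset.range (N i)) (fun i k =>
    (if i ∈ B then (if k < M then (1:ℝ) / 2 else 0) else if k = 0 then 1 else 0) * walsh k (x i))]
  refine Finset.prod_congr rfl fun i _ => ?_
  by_cases h : i ∈ B
  · simp only [h, if_true]
    unfold dirichletKernel
    rw [Finset.sum_div]
    refine Finset.sum_congr rfl fun k hk => ?_
    rw [if_pos ((Finset.mem_range.1 hk).trans_le (hM i))]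
    ring
  · have := hN i
    simp [h, walsh_zero]
    omega

lemma mean_eq {d : ℕ} (B : Finset (Fin d)) (M p : ℕ) (hp : 1 ≤ p) (hM : p ≤ M) (hl : logSum p ≠ 0)
    (x : Fin d → ℝ) :
    mixedLogMean B (fun y => ∏ i ∈ B, dirichletKernel M (y i) / 2) (fun _ => p) x =
      ∏ i, (if i ∈ B then (logSum p)⁻¹ * HK p (x i) / 2 else 1) := by
  unfold mixedLogMean
  have : ∀ i ∈ Fintype.piFinset (fun _ : Fin d => Finset.Ico 1 p),
      rectPartialSum (fun y => ∏ i ∈ B, dirichletKernel M (y i) / 2)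
        (fun j => if j ∈ B then p - i j else i j) x / ∏ j, (i j : ℝ) =
      ∏ j, ((if j ∈ B then dirichletKernel (p - i j) (x j) / 2 else 1) / (i j : ℝ)) := by
    intro i hi
    have hi' : ∀ j, 1 ≤ i j ∧ i j < p := fun j => by
      simpa using (Fintype.mem_piFinset.1 hi j)
    rw [partial_eq, Finset.prod_div_distrib]
    · congr 1
      refine Finset.prod_congr rfl fun j _ => ?_
      split_ifs <;> rfl
    · intro j; have := hi' j; split_ifs <;> omega
    · intro j; have := hi' j; split_ifs <;> omega
  rw [Finset.sum_congr rfl this, ← Finset.prod_univ_sum (fun _ => Finset.Ico 1 p) (fun j k =>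
    (if j ∈ B then dirichletKernel (p - k) (x j) / 2 else 1) / (k : ℝ)), ← Finset.prod_inv_distrib,
    ← Finset.prod_mul_distrib]
  refine Finset.prod_congr rfl fun j _ => ?_
  by_cases h : j ∈ B
  · simp only [h, if_true]
    unfold HK
    rw [mul_div_assoc, Finset.sum_div]
    congr 1
    refine Finset.sum_congr rfl fun k _ => ?_
    ring
  · simp only [h, if_false]
    have : ∑ k ∈ Finset.Ico 1 p, (1:ℝ) / k = logSum p := by
      unfold logSum
      congr 1
    rw [this, inv_mul_cancel₀ hl]

/-- `L^1` lower bound for the mixed logarithmic means of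
`⊗_{i∈B} D_{2^{2n+1}}/2`: at least `c·n^{|B|}` for `n ≥ m₀`. -/
theorem stmt14 (d : ℕ) (hd : 1 ≤ d) (B : Finset (Fin d)) (hB : B.Nonempty) :
    ∃ c > (0:ℝ), ∀ n : ℕ, m₀ ≤ n →
      c * (n : ℝ) ^ B.card ≤
        ∫ x, |mixedLogMean B
          (fun y => ∏ i ∈ B, dirichletKernel (2 ^ (2 * n + 1)) (y i) / 2)
          (fun _ => pIdx n) x| ∂(cubeMeasure d) := by
  refine ⟨(1 / 120) ^ B.card, by positivity, fun n _ => ?_⟩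
  rcases Nat.eq_zero_or_pos n with h0 | hn
  · subst h0
    rw [Nat.cast_zero, zero_pow (Finset.card_pos.2 hB).ne', mul_zero]
    exact integral_nonneg fun x => abs_nonneg _
  have hl := logSum_pos n hn
  have hp1 : 1 ≤ pIdx n := (Nat.one_le_pow n 4 (by norm_num)).trans (pIdx_ge n)
  have hpM : pIdx n ≤ 2 ^ (2 * n + 1) := by
    have := pIdx_three n
    rw [pow_succ] at this ⊢
    rw [pow_mul]; norm_num; omega
  simp only [mean_eq B _ _ hp1 hpM hl.ne', Finset.abs_prod]
  rw [cube_eq, integral_fintype_prod_eq_prod (fun (i : Fin d) (t : ℝ) =>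
    |if i ∈ B then (logSum (pIdx n))⁻¹ * HK (pIdx n) t / 2 else 1|)]
  have hF := F_norm n hn
  have : ∀ i, ∫ t, |if i ∈ B then (logSum (pIdx n))⁻¹ * HK (pIdx n) t / 2 else 1| ∂unitMeasure =
      if i ∈ B then (∫ t, |(logSum (pIdx n))⁻¹ * HK (pIdx n) t| ∂unitMeasure) / 2 else 1 := by
    intro i
    by_cases h : i ∈ B
    · simp only [h, if_true, abs_div, integral_div, abs_two]
    · simp [h]
  simp only [this, Finset.prod_ite_mem, Finset.univ_inter, Finset.prod_const]
  rw [← mul_pow]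
  refine pow_le_pow_left₀ (by positivity) ?_ _
  linarith

end
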